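/- Fix integers q > 2, t ≥ 1, and a real ε > 0, and let δ = δ(n) = 2t·q^{2t}·⌈log_2 n⌉. There exists n_0 such that for every n ≥ n_0 there is a function f : Σ_q^n → {0, 1, …, N−1} with log_2 N ≤ log_2 n + (8+ε)·log_2 log_2 n, such that for all (p,δ)-dense x, x' ∈ Σ_q^n with f(x) = f(x') and B_{≤t}(x) ∩ B_{≤t}(x') ≠ ∅, one has x = x'. (Equivalently, any (p,δ)-dense x ∈ Σ_q^n can be uniquely recovered from the sketch f(x), of at most log_2 n + 8·log_2 log_2 n + o(log_2 log_2 n) + γ_{q,t} bits, and any y ∈ B_{≤t}(x).) -/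

import Mathlib

/-- The pattern `p = 0^t 1^t`: `t` zeros followed by `t` ones. -/
def pat (t : ℕ) : List ℕ := List.replicate t 0 ++ List.replicate t 1

/-- `x` is `(p,δ)`-dense: every substring of `x` of length `δ` contains an
occurrence of `p = 0^t 1^t`. -/
def pdense (t δ : ℕ) (x : List ℕ) : Prop :=
  ∀ a, a + δ ≤ x.length →
    ∃ i, a ≤ i ∧ i + 2 * t ≤ a + δ ∧ (x.drop i).take (2 * t) = pat t

/-- `burst t' x` is the set `B_{t'}(x)` of strings obtained from `x` by
deleting `t'` consecutive symbols. -/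
def burst (t' : ℕ) (x : List ℕ) : Set (List ℕ) :=
  {y | ∃ i, i + t' ≤ x.length ∧ y = x.take i ++ x.drop (i + t')}

/-- `burstLe t x` is the set `B_{≤t}(x) = ∪_{t'=0}^{t} B_{t'}(x)`. -/
def burstLe (t : ℕ) (x : List ℕ) : Set (List ℕ) :=
  {y | ∃ t' ≤ t, y ∈ burst t' x}

/-!
Two strings of the same length with a common burst deletion of length `τ` have the form `P u M S`
and `P M v S` with `|u| = |v| = τ`, so their prefix counts of the pattern agree up to the start of
`u` and differ, inside `M`, by a constant `d` minus the number of occurrences in a window of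
length `τ`. Occurrences are too far apart for such a window to hold two of them. Hence, if the total
counts agree, the difference of the sums of all prefix counts is, up to a constant depending on `t`,
at most `-k` when `d ≤ 0` and at least `k` when `d ≥ 1`, where `k` is the number of occurrences in
`M`. Equal sums therefore leave only boundedly many occurrences in `M`, and density makes
`|M| = O(log n)`.

The strings then differ within an interval of length `O(log n)`, which lies in a single block of one
of two mutually offset partitions. A block is confusable with `O((log n) ^ 2)` others, so greedy
colouring gives a hash with that many values separating confusable blocks, and the sum of the block
hashes recovers the only block in which the strings differ. The counts modulo `5t + 1`, the sums
modulo `3tn + 1` and the two sums of hashes together take `O(n (log n) ^ 4)` values.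
-/

/-! ### Counting functions -/

section Count

variable {p r : ℕ → Prop} [DecidablePred p] [DecidablePred r]

theorem count_add_add_count_eq_of_shift {a b m : ℕ} (h : ∀ j < m, p (a + j) ↔ r (b + j)) :
    Nat.count p (a + m) + Nat.count r b = Nat.count r (b + m) + Nat.count p a := by
  have hcount : Nat.count (fun j => p (a + j)) m = Nat.count (fun j => r (b + j)) m :=
    le_antisymm (Nat.count_mono_left fun j hj => (h j hj).1)
      (Nat.count_mono_left fun j hj => (h j hj).2)
  rw [Nat.count_add, Nat.count_add, hcount]
  omega

theorem count_le_count_add_sub {k l : ℕ} (hkl : k ≤ l) :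
    Nat.count p l ≤ Nat.count p k + (l - k) := by
  obtain ⟨m, rfl⟩ := Nat.exists_eq_add_of_le hkl
  rw [Nat.count_add, Nat.add_sub_cancel_left]
  exact Nat.add_le_add_left (Nat.count_le _) _

theorem count_add_le_succ_of_spaced {s k m : ℕ} (hp : ∀ ⦃i j⦄, p i → p j → i < j → i + s ≤ j)
    (hm : m ≤ s) : Nat.count p (k + m) ≤ Nat.count p k + 1 := by
  have not_lt_of_mem : ∀ {i j}, i < m → j < m → p (k + i) → p (k + j) → ¬i < j :=
    fun _ hj hpi hpj hij => by have := hp hpi hpj (by omega); omega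
  rw [Nat.count_add, Nat.count_eq_card_filter_range (fun j => p (k + j))]
  refine Nat.add_le_add_left ?_ _
  refine Finset.card_le_one.2 fun i hi j hj => ?_
  rw [Finset.mem_filter, Finset.mem_range] at hi hj
  exact le_antisymm (not_lt.1 (not_lt_of_mem hj.1 hi.1 hj.2 hi.2))
    (not_lt.1 (not_lt_of_mem hi.1 hj.1 hi.2 hj.2))

theorem count_add_le_count_of_dense {a b δ : ℕ}
    (hp : ∀ c, a ≤ c → c + δ ≤ b → ∃ j, c ≤ j ∧ j < c + δ ∧ p j) (h : ℕ) (hb : a + h * δ ≤ b) :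
    Nat.count p a + h ≤ Nat.count p (a + h * δ) := by
  induction h with
  | zero => simp
  | succ h ih =>
    rw [show a + (h + 1) * δ = a + h * δ + δ by ring] at hb ⊢
    obtain ⟨j, hcj, hjc, hj⟩ := hp (a + h * δ) (Nat.le_add_right _ _) hb
    have hlt : Nat.count p (a + h * δ) < Nat.count p (a + h * δ + δ) :=
      (Nat.count_monotone p hcj).trans_lt (Nat.count_strict_mono hj hjc)
    have := ih (by omega)
    omega

end Count

theorem abs_sum_sub_sum_le_of_subset {α M : Type*} [AddCommGroup M] [LinearOrder M]
    [IsOrderedAddMonoid M] {g : α → M} {U V W : Finset α} {K : M} (hUV : U ⊆ V) (hVW : V ⊆ W)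
    (hg : ∀ k ∈ W, k ∉ V → g k = 0) (hK : ∀ k ∈ V, |g k| ≤ K) :
    |∑ k ∈ W, g k - ∑ k ∈ U, g k| ≤ (V.card - U.card) • K := by
  classical
  rw [← Finset.sum_subset hVW hg, ← Finset.sum_sdiff hUV, add_sub_cancel_right,
    ← Finset.card_sdiff_of_subset hUV]
  exact (Finset.abs_sum_le_sum_abs _ _).trans
    (Finset.sum_le_card_nsmul _ _ _ fun k hk => hK k (Finset.sdiff_subset hk))

/-! ### Occurrences of the pattern -/

/-- The pattern `0^t 1^t` occurs in `x` at position `j`. -/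
def Occ (t : ℕ) (x : List ℕ) (j : ℕ) : Prop := (x.drop j).take (2 * t) = pat t

instance (t : ℕ) (x : List ℕ) : DecidablePred (Occ t x) := fun _ => decEq _ _

theorem occ_iff {t : ℕ} {x : List ℕ} {j : ℕ} :
    Occ t x j ↔ ∀ k < 2 * t, x[j + k]? = some (if k < t then 0 else 1) := by
  have getElem?_pat : ∀ k,
      (pat t)[k]? = if k < 2 * t then some (if k < t then 0 else 1) else none := by
    intro k
    simp only [pat, List.getElem?_append, List.getElem?_replicate, List.length_replicate]
    split_ifs <;> first | rfl | omega
  simp only [Occ, List.ext_getElem?_iff, List.getElem?_take, List.getElem?_drop, getElem?_pat]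
  refine forall_congr' fun k => ?_
  by_cases hk : k < 2 * t <;> simp [hk]

theorem occ_congr {t j k : ℕ} {x y : List ℕ} (h : ∀ l < 2 * t, x[j + l]? = y[k + l]?) :
    Occ t x j ↔ Occ t y k := by
  rw [occ_iff, occ_iff]
  exact forall₂_congr fun l hl => by rw [h l hl]

/-- Two overlapping copies of `0^t 1^t` would place the last `0` of the later copy on a `1` of the
earlier one, or the first `0` of the later copy on a `1` of the earlier one. -/
theorem Occ.add_le_of_lt {t j k : ℕ} {x : List ℕ} (hj : Occ t x j) (hk : Occ t x k)
    (hjk : j < k) : j + 2 * t ≤ k := by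
  rw [occ_iff] at hj hk
  by_contra hlt
  have clash : ∀ a b, a < 2 * t → t ≤ a → b < t → j + a ≠ k + b := by
    intro a b ha hta hb hab
    have hone := hj a ha
    rw [hab, hk b (by omega), if_pos hb, if_neg (by omega)] at hone
    simp at hone
  by_cases hc : k ≤ j + t
  · exact clash (k - j + t - 1) (t - 1) (by omega) (by omega) (by omega) (by omega)
  · exact clash (k - j) 0 (by omega) (by omega) (by omega) (by omega)

theorem pdense.two_mul_le {t δ : ℕ} {x : List ℕ} (hx : pdense t δ x) (hδ : δ ≤ x.length) :
    2 * t ≤ δ := by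
  obtain ⟨i, -, hi, -⟩ := hx 0 (by omega)
  omega

/-- The number of occurrences of the pattern in `x` that start before position `k`. -/
def occCount (t : ℕ) (x : List ℕ) (k : ℕ) : ℕ := Nat.count (Occ t x) k

theorem occCount_mono (t : ℕ) (x : List ℕ) : Monotone (occCount t x) := Nat.count_monotone _

theorem occCount_le_and_le_add (t : ℕ) (x : List ℕ) {k l : ℕ} (hkl : k ≤ l) :
    occCount t x k ≤ occCount t x l ∧ occCount t x l ≤ occCount t x k + (l - k) :=
  ⟨occCount_mono t x hkl, count_le_count_add_sub hkl⟩

theorem occCount_add_le_of_dense {t δ a h : ℕ} {x : List ℕ} (hx : pdense t δ x) (ht : 0 < t)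
    (hb : a + h * δ ≤ x.length) : occCount t x a + h ≤ occCount t x (a + h * δ) := by
  refine count_add_le_count_of_dense (b := x.length) (fun c _ hc => ?_) h hb
  obtain ⟨j, hcj, hjc, hj⟩ := hx c hc
  exact ⟨j, hcj, by omega, hj⟩

/-- The checksum `∑ₖ occCount t x k`. An occurrence at `j` contributes `x.length - 1 - j`, so this
is a Varshamov–Tenengolts sum of the positions of the occurrences, written in the form in which
the checksums of two strings can be compared term by term. -/
def occChecksum (t : ℕ) (x : List ℕ) : ℕ := ∑ k ∈ Finset.range x.length, occCount t x k

/-! ### Pairs of strings with a common burst deletion -/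

/-- `x` and `y` have the same length and a common burst deletion of length at most `t`. -/
def Confusable (t : ℕ) (x y : List ℕ) : Prop :=
  x.length = y.length ∧ (burstLe t x ∩ burstLe t y).Nonempty

theorem Confusable.symm {t : ℕ} {x y : List ℕ} (h : Confusable t x y) : Confusable t y x :=
  ⟨h.1.symm, Set.inter_comm (burstLe t x) _ ▸ h.2⟩

theorem Confusable.exists_take_append_drop_eq {t : ℕ} {x y : List ℕ} (h : Confusable t x y) :
    ∃ i i' τ, τ ≤ t ∧ i + τ ≤ x.length ∧ i' + τ ≤ y.length ∧
      x.take i ++ x.drop (i + τ) = y.take i' ++ y.drop (i' + τ) := by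
  obtain ⟨hlen, z, ⟨τ, hτ, i, hi, hz⟩, ⟨τ', hτ', i', hi', hz'⟩⟩ := h
  have hx := congrArg List.length hz
  have hy := congrArg List.length hz'
  simp only [List.length_append, List.length_take, List.length_drop] at hx hy
  obtain rfl : τ = τ' := by omega
  exact ⟨i, i', τ, hτ, hi, hi', hz.symm.trans hz'⟩

theorem getElem?_take_append_drop_add {α : Type*} {x : List α} {i : ℕ} (hi : i ≤ x.length)
    (τ j : ℕ) : (x.take i ++ x.drop (i + τ))[j]? = if j < i then x[j]? else x[j + τ]? := by
  rw [List.getElem?_append, List.length_take, min_eq_left hi]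
  split_ifs with hj
  · rw [List.getElem?_take_of_lt hj]
  · rw [List.getElem?_drop]
    congr 1
    omega

/-- `x = P u M S` and `y = P M v S` with `|P| = i`, `|P M| = i'` and `|u| = |v| = τ`, expressed
entrywise. -/
structure Shift (i i' τ : ℕ) (x y : List ℕ) : Prop where
  length_eq : x.length = y.length
  le : i ≤ i'
  add_le_length : i' + τ ≤ x.length
  pre : ∀ j, j < i → x[j]? = y[j]?
  mid : ∀ j, i ≤ j → j < i' → x[j + τ]? = y[j]?
  post : ∀ j, i' + τ ≤ j → x[j]? = y[j]?

theorem shift_of_take_append_drop_eq {i i' τ : ℕ} {x y : List ℕ} (hlen : x.length = y.length)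
    (hle : i ≤ i') (hi' : i' + τ ≤ y.length)
    (h : x.take i ++ x.drop (i + τ) = y.take i' ++ y.drop (i' + τ)) : Shift i i' τ x y := by
  have entry : ∀ j, (if j < i then x[j]? else x[j + τ]?) = if j < i' then y[j]? else y[j + τ]? :=
    fun j => by
      rw [← getElem?_take_append_drop_add (by omega), h, getElem?_take_append_drop_add (by omega)]
  refine ⟨hlen, hle, by omega, fun j hj => ?_, fun j hij hj => ?_, fun j hj => ?_⟩
  · simpa only [if_pos hj, if_pos (hj.trans_le hle)] using entry j
  · simpa only [if_neg hij.not_gt, if_pos hj] using entry j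
  · have := entry (j - τ)
    rwa [if_neg (by omega), if_neg (by omega), Nat.sub_add_cancel (by omega)] at this

theorem Confusable.exists_shift {t : ℕ} {x y : List ℕ} (h : Confusable t x y) :
    ∃ i i' τ, τ ≤ t ∧ (Shift i i' τ x y ∨ Shift i i' τ y x) := by
  obtain ⟨i, i', τ, hτ, hi, hi', heq⟩ := h.exists_take_append_drop_eq
  rcases le_total i i' with hle | hle
  · exact ⟨i, i', τ, hτ, Or.inl (shift_of_take_append_drop_eq h.1 hle hi' heq)⟩
  · exact ⟨i', i, τ, hτ, Or.inr (shift_of_take_append_drop_eq h.1.symm hle hi heq.symm)⟩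

namespace Shift

variable {t i i' τ : ℕ} {x y : List ℕ}

theorem confusable (hs : Shift i i' τ x y) (hτ : τ ≤ t) : Confusable t x y := by
  obtain ⟨hlen, hle, hlx, hpre, hmid, hpost⟩ := hs
  refine ⟨hlen, _, ⟨τ, hτ, i, by omega, rfl⟩, ⟨τ, hτ, i', by omega, ?_⟩⟩
  refine List.ext_getElem? fun j => ?_
  rw [getElem?_take_append_drop_add (by omega), getElem?_take_append_drop_add (by omega)]
  split_ifs with hi hi' hi'
  · exact hpre j hi
  · omega
  · exact hmid j (by omega) hi'
  · exact hpost _ (by omega)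

theorem eq_of_getElem?_eq (hs : Shift i i' τ x y)
    (h : ∀ j, i ≤ j → j < i' + τ → x[j]? = y[j]?) : x = y := by
  refine List.ext_getElem? fun j => ?_
  rcases lt_or_ge j i with hi | hi
  · exact hs.pre j hi
  rcases lt_or_ge j (i' + τ) with hi' | hi'
  · exact h j hi hi'
  · exact hs.post j hi'

/-! ### Comparing the occurrences in the two strings -/

theorem occCount_pre (hs : Shift i i' τ x y) {k : ℕ} (hk : k ≤ i + 1 - 2 * t) :
    occCount t x k = occCount t y k := by
  have h := count_add_add_count_eq_of_shift (p := Occ t x) (r := Occ t y) (a := 0) (b := 0) (m := k)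
    fun j hj => occ_congr fun l hl => hs.pre _ (by omega)
  simpa only [occCount, zero_add, Nat.count_zero, add_zero] using h

theorem occCount_mid (hs : Shift i i' τ x y) {k : ℕ} (hik : i ≤ k) (hk : k + 2 * t ≤ i' + 1) :
    occCount t x (k + τ) + occCount t y i = occCount t y k + occCount t x (i + τ) := by
  have h := count_add_add_count_eq_of_shift (p := Occ t x) (r := Occ t y) (a := i + τ) (b := i)
    (m := k - i) fun j hj => occ_congr fun l hl => by
      rw [show i + τ + j + l = i + j + l + τ by omega]
      exact hs.mid _ (by omega) (by omega)
  rwa [show i + τ + (k - i) = k + τ by omega, Nat.add_sub_cancel' hik] at h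

theorem occCount_post (hs : Shift i i' τ x y) {k : ℕ} (hk : i' + τ ≤ k) :
    occCount t x k + occCount t y (i' + τ) = occCount t y k + occCount t x (i' + τ) := by
  have h := count_add_add_count_eq_of_shift (p := Occ t x) (r := Occ t y) (a := i' + τ)
    (b := i' + τ) (m := k - (i' + τ)) fun _ _ => occ_congr fun _ _ => hs.post _ (by omega)
  rwa [Nat.add_sub_cancel' hk] at h

/-- Outside the windows of length less than `2t + τ` around `i` and `i'`, occurrences of the two
strings correspond to each other. -/
theorem abs_occCount_length_sub_le (hs : Shift i i' τ x y) (ht : 0 < t) (hτt : τ ≤ t)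
    (hlong : i + 2 * t ≤ i') :
    |(occCount t x x.length : ℤ) - occCount t y x.length| ≤ 5 * t := by
  have pre := hs.occCount_pre (t := t) le_rfl
  have mid := hs.occCount_mid (t := t) (k := i' + 1 - 2 * t) (by omega) (by omega)
  have post := hs.occCount_post (t := t) hs.add_le_length
  have hxi := occCount_le_and_le_add t x (show i + 1 - 2 * t ≤ i + τ by omega)
  have hyi := occCount_le_and_le_add t y (show i + 1 - 2 * t ≤ i by omega)
  have hxi' := occCount_le_and_le_add t x (show i' + 1 - 2 * t + τ ≤ i' + τ by omega)
  have hyi' := occCount_le_and_le_add t y (show i' + 1 - 2 * t ≤ i' + τ by omega)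
  rw [abs_le]
  omega

theorem occCount_post_eq (hs : Shift i i' τ x y)
    (hcount : occCount t x x.length = occCount t y x.length) {k : ℕ} (hk : i' + τ ≤ k) :
    occCount t x k = occCount t y k := by
  have hend := hs.occCount_post (t := t) hs.add_le_length
  have hpost := hs.occCount_post (t := t) hk
  omega

theorem abs_occCount_sub_le (hs : Shift i i' τ x y) (ht : 0 < t) (hτt : τ ≤ t)
    (hcount : occCount t x x.length = occCount t y x.length) (k : ℕ) :
    |(occCount t x k : ℤ) - occCount t y k| ≤ (3 * t : ℕ) := by
  have pre := hs.occCount_pre (t := t) le_rfl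
  have post := hs.occCount_post_eq hcount le_rfl
  rw [abs_le]
  rcases le_total k (i + 1 - 2 * t) with hk | hk
  · have := hs.occCount_pre hk
    omega
  have hxa := occCount_le_and_le_add t x hk
  have hya := occCount_le_and_le_add t y hk
  rcases le_total k i with hki | hki
  · omega
  rcases le_total (k + 2 * t) (i' + 1) with hkb | hkb
  · have mid := hs.occCount_mid hki hkb
    have hxi := occCount_le_and_le_add t x (show i + 1 - 2 * t ≤ i + τ by omega)
    have hyi := occCount_le_and_le_add t y (show i + 1 - 2 * t ≤ i by omega)
    have hxk := occCount_le_and_le_add t x (show k ≤ k + τ by omega)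
    omega
  rcases le_total k (i' + τ) with hke | hke
  · have hxe := occCount_le_and_le_add t x hke
    have hye := occCount_le_and_le_add t y hke
    omega
  · have := hs.occCount_post_eq hcount hke
    omega

/-- For `k` in the shifted part, `occCount t x k - occCount t y k` is
`d - (occCount t x (k + τ) - occCount t x k)` with `d` constant. If `d ≤ 0`, every occurrence makes
a term at most `-1`. If `d ≥ 1`, every term is nonnegative since a window of length `τ < 2t` holds
at most one occurrence, and just after an occurrence such a window is empty. -/
theorem exists_occCount_sub_le_abs_sum (hs : Shift i i' τ x y) (hτ : 0 < τ) (hτt : τ ≤ t)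
    {b : ℕ} (hib : i ≤ b) (hb : b + 2 * t ≤ i' + 1) :
    ∃ u, i ≤ u ∧ u ≤ i + 1 ∧ (occCount t x b : ℤ) - occCount t x i ≤
      |∑ k ∈ Finset.Ico u (u + (b - i)), ((occCount t x k : ℤ) - occCount t y k)| := by
  have telescope : ∑ k ∈ Finset.Ico i b, ((occCount t x (k + 1) : ℤ) - occCount t x k) =
      occCount t x b - occCount t x i := Finset.sum_Ico_sub (fun k => (occCount t x k : ℤ)) hib
  rcases le_or_gt (occCount t x (i + τ)) (occCount t y i) with hd | hd
  · refine ⟨i, le_rfl, Nat.le_succ i, ?_⟩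
    rw [Nat.add_sub_cancel' hib, ← telescope]
    refine le_trans ?_ (neg_le_abs _)
    rw [← Finset.sum_neg_distrib]
    refine Finset.sum_le_sum fun k hk => ?_
    rw [Finset.mem_Ico] at hk
    have mid := hs.occCount_mid (t := t) hk.1 (by omega)
    have := occCount_mono t x (show k + 1 ≤ k + τ by omega)
    omega
  · refine ⟨i + 1, Nat.le_succ i, le_rfl, ?_⟩
    rw [show i + 1 + (b - i) = b + 1 by omega, ← Finset.sum_Ico_add', ← telescope]
    refine le_trans (Finset.sum_le_sum fun k hk => ?_) (le_abs_self _)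
    rw [Finset.mem_Ico] at hk
    have mid := hs.occCount_mid (t := t) (k := k + 1) (by omega) (by omega)
    have hwindow : occCount t x (k + (1 + τ)) ≤ occCount t x k + 1 :=
      count_add_le_succ_of_spaced (s := 2 * t) (fun _ _ hj hl => hj.add_le_of_lt hl) (by omega)
    rw [← add_assoc] at hwindow
    omega

theorem abs_occChecksum_sub_le (hs : Shift i i' τ x y) (ht : 0 < t) (hτt : τ ≤ t)
    (hcount : occCount t x x.length = occCount t y x.length) :
    |(occChecksum t x : ℤ) - occChecksum t y| ≤ 3 * t * x.length := by
  rw [occChecksum, occChecksum, ← hs.length_eq, Nat.cast_sum, Nat.cast_sum,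
    ← Finset.sum_sub_distrib]
  calc |∑ k ∈ Finset.range x.length, ((occCount t x k : ℤ) - occCount t y k)|
      ≤ (Finset.range x.length).card • ((3 * t : ℕ) : ℤ) :=
        (Finset.abs_sum_le_sum_abs _ _).trans (Finset.sum_le_card_nsmul _ _ _ fun k _ =>
          hs.abs_occCount_sub_le ht hτt hcount k)
    _ = 3 * t * x.length := by
        rw [Finset.card_range, nsmul_eq_mul]
        push_cast
        ring

theorem occCount_sub_le_of_occChecksum_eq (hs : Shift i i' τ x y) (hτ : 0 < τ) (hτt : τ ≤ t)
    (hlong : i + 2 * t ≤ i') (hcount : occCount t x x.length = occCount t y x.length)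
    (hsum : occChecksum t x = occChecksum t y) :
    occCount t x (i' + 1 - 2 * t) ≤ occCount t x i + 15 * t ^ 2 := by
  have ht : 0 < t := hτ.trans_le hτt
  have hlen := hs.add_le_length
  obtain ⟨u, hiu, hui, hu⟩ := hs.exists_occCount_sub_le_abs_sum hτ hτt
    (b := i' + 1 - 2 * t) (by omega) (by omega)
  have hsum' : ∑ k ∈ Finset.range x.length, ((occCount t x k : ℤ) - occCount t y k) = 0 := by
    rw [occChecksum, occChecksum, ← hs.length_eq] at hsum
    rw [Finset.sum_sub_distrib, sub_eq_zero]
    exact_mod_cast hsum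
  have hclose := abs_sum_sub_sum_le_of_subset
    (g := fun k => (occCount t x k : ℤ) - occCount t y k)
    (U := Finset.Ico u (u + (i' + 1 - 2 * t - i))) (V := Finset.Ico (i + 1 - 2 * t) (i' + τ))
    (W := Finset.range x.length) (Finset.Ico_subset_Ico (by omega) (by omega))
    (by rw [Finset.range_eq_Ico]; exact Finset.Ico_subset_Ico (Nat.zero_le _) hlen)
    (fun k _ hk => by
      rw [Finset.mem_Ico, not_and_or, not_le, not_lt] at hk
      rw [sub_eq_zero, Nat.cast_inj]
      exact hk.elim (fun hk => hs.occCount_pre hk.le) (hs.occCount_post_eq hcount))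
    (fun k _ => hs.abs_occCount_sub_le ht hτt hcount k)
  rw [hsum', zero_sub, abs_neg, Nat.card_Ico, Nat.card_Ico, nsmul_eq_mul] at hclose
  have hmargin : (i' + τ - (i + 1 - 2 * t) - (u + (i' + 1 - 2 * t - i) - u)) * (3 * t) ≤
      15 * t ^ 2 :=
    calc _ ≤ 5 * t * (3 * t) := Nat.mul_le_mul_right _ (by omega)
      _ = 15 * t ^ 2 := by ring
  have hgap : (occCount t x (i' + 1 - 2 * t) : ℤ) - occCount t x i ≤ (15 * t ^ 2 : ℕ) :=
    hu.trans (hclose.trans (by exact_mod_cast hmargin))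
  omega

theorem lt_add_of_dense (hs : Shift i i' τ x y) (hτ : 0 < τ) (hτt : τ ≤ t) {δ n : ℕ}
    (hx : x.length = n) (hd : pdense t δ x)
    (hcount : (occCount t x n : ZMod (5 * t + 1)) = occCount t y n)
    (hsum : (occChecksum t x : ZMod (3 * t * n + 1)) = occChecksum t y) :
    i' < i + (15 * t ^ 2 + 2) * δ := by
  subst hx
  by_contra! hlong
  have hlen := hs.add_le_length
  have hexpand : (15 * t ^ 2 + 2) * δ = (15 * t ^ 2 + 1) * δ + δ := by ring
  have htδ : 2 * t ≤ δ := hd.two_mul_le (by omega)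
  have hlong' : i + 2 * t ≤ i' := by omega
  have hcount' : occCount t x x.length = occCount t y x.length := by
    refine ((ZMod.natCast_eq_natCast_iff _ _ _).1 hcount).eq_of_abs_lt ?_
    rw [abs_sub_comm]
    exact (hs.abs_occCount_length_sub_le (hτ.trans_le hτt) hτt hlong').trans_lt
      (by push_cast; omega)
  have hsum' : occChecksum t x = occChecksum t y := by
    refine ((ZMod.natCast_eq_natCast_iff _ _ _).1 hsum).eq_of_abs_lt ?_
    rw [abs_sub_comm]
    exact (hs.abs_occChecksum_sub_le (hτ.trans_le hτt) hτt hcount').trans_lt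
      (by push_cast; omega)
  have hfew := hs.occCount_sub_le_of_occChecksum_eq hτ hτt hlong' hcount' hsum'
  have hmany := occCount_add_le_of_dense (a := i) (h := 15 * t ^ 2 + 1) hd (by omega) (by omega)
  have := occCount_mono t x (show i + (15 * t ^ 2 + 1) * δ ≤ i' + 1 - 2 * t by omega)
  omega

end Shift

/-! ### Hashing confusable words -/

theorem exists_separating_of_card_lt {α γ : Type*} [Fintype γ] [Nonempty γ] {R : α → α → Prop}
    [DecidableRel R] (hR : ∀ u v, R u v → R v u) (V : Finset α)
    (hdeg : ∀ v ∈ V, (V.filter (R v)).card < Fintype.card γ) :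
    ∃ h : α → γ, ∀ u ∈ V, ∀ v ∈ V, R u v → h u = h v → u = v := by
  classical
  induction V using Finset.induction_on with
  | empty => simp
  | insert a s ha ih =>
    obtain ⟨h, hs⟩ := ih fun v hv => (Finset.card_le_card (Finset.filter_subset_filter _
      (Finset.subset_insert a s))).trans_lt (hdeg v (Finset.mem_insert_of_mem hv))
    obtain ⟨c, -, hc⟩ := Finset.exists_mem_notMem_of_card_lt_card (t := Finset.univ)
      (s := ((insert a s).filter (R a)).image h)
      (Finset.card_image_le.trans_lt (hdeg a (Finset.mem_insert_self a s)))
    have fresh : ∀ v ∈ s, R a v → h v ≠ c := fun v hv hav hvc => hc <| Finset.mem_image.2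
      ⟨v, Finset.mem_filter.2 ⟨Finset.mem_insert_of_mem hv, hav⟩, hvc⟩
    have ne_a : ∀ v ∈ s, v ≠ a := fun v hv hva => ha (hva ▸ hv)
    refine ⟨Function.update h a c, fun u hu v hv huv => ?_⟩
    rcases Finset.mem_insert.1 hu with rfl | hus <;> rcases Finset.mem_insert.1 hv with rfl | hvs
    · exact fun _ => rfl
    · rw [Function.update_self, Function.update_of_ne (ne_a v hvs)]
      exact fun heq => (fresh v hvs huv heq.symm).elim
    · rw [Function.update_self, Function.update_of_ne (ne_a u hus)]
      exact fun heq => (fresh u hus (hR _ _ huv) heq).elim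
    · rw [Function.update_of_ne (ne_a u hus), Function.update_of_ne (ne_a v hvs)]
      exact hs u hus v hvs huv

theorem finite_setOf_length_le_forall_lt (q m : ℕ) :
    {l : List ℕ | l.length ≤ m ∧ ∀ a ∈ l, a < q}.Finite := by
  refine ((List.finite_length_le (Fin q) m).image (List.map Fin.val)).subset ?_
  rintro l ⟨hlen, hl⟩
  refine ⟨l.pmap (fun a ha => ⟨a, ha⟩) hl, by simpa using hlen, ?_⟩
  rw [List.map_pmap, List.pmap_eq_map, List.map_id']

/-- The words of length at most `m` over the alphabet `Σ_q`. -/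
noncomputable def words (q m : ℕ) : Finset (List ℕ) :=
  (finite_setOf_length_le_forall_lt q m).toFinset

theorem mem_words {q m : ℕ} {l : List ℕ} : l ∈ words q m ↔ l.length ≤ m ∧ ∀ a ∈ l, a < q :=
  Set.Finite.mem_toFinset _

/-- An upper bound for the number of words over `Σ_q` confusable with a given word of length at most
`ℓ`: such a word is determined by the length and the two positions of the bursts and by the symbols
that have to be inserted. -/
noncomputable def confusableBound (q t ℓ : ℕ) : ℕ :=
  (t + 1) * ((ℓ + 1) * ((ℓ + 1) * (words q t).card))

open Classical in
theorem card_filter_confusable_le {q t ℓ : ℕ} {x : List ℕ} (hx : x.length ≤ ℓ) :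
    ((words q ℓ).filter (Confusable t x)).card ≤ confusableBound q t ℓ := by
  let P := Finset.range (t + 1) ×ˢ Finset.range (ℓ + 1) ×ˢ Finset.range (ℓ + 1) ×ˢ words q t
  let reinsert : ℕ × ℕ × ℕ × List ℕ → List ℕ := fun ⟨τ, i, i', u⟩ =>
    let z := x.take i ++ x.drop (i + τ)
    z.take i' ++ u ++ z.drop i'
  have hsub : (words q ℓ).filter (Confusable t x) ⊆ P.image reinsert := by
    intro y hy
    obtain ⟨hyw, hxy⟩ := Finset.mem_filter.1 hy
    obtain ⟨hylen, hyq⟩ := mem_words.1 hyw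
    obtain ⟨i, i', τ, hτ, hi, hi', heq⟩ := hxy.exists_take_append_drop_eq
    have htake : (y.take i').length = i' := by rw [List.length_take, min_eq_left (by omega)]
    have hu : (y.drop i').take τ ∈ words q t :=
      mem_words.2 ⟨(List.length_take_le _ _).trans hτ,
        fun a ha => hyq a (List.mem_of_mem_drop (List.mem_of_mem_take ha))⟩
    refine Finset.mem_image.2 ⟨(τ, i, i', (y.drop i').take τ), ?_, ?_⟩
    · simp only [P, Finset.mem_product, Finset.mem_range]
      exact ⟨by omega, by omega, by omega, hu⟩
    · simp only [reinsert, heq]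
      rw [List.take_left' htake, List.drop_left' htake, List.append_assoc, ← List.drop_drop,
        List.take_append_drop, List.take_append_drop]
  calc _ ≤ P.card := (Finset.card_le_card hsub).trans Finset.card_image_le
    _ = confusableBound q t ℓ := by
      simp only [P, Finset.card_product, Finset.card_range, confusableBound]

/-- `h` separates confusable words of length at most `ℓ` over `Σ_q`. -/
def IsBurstHash {G : Type*} (q t ℓ : ℕ) (h : List ℕ → G) : Prop :=
  ∀ x ∈ words q ℓ, ∀ y ∈ words q ℓ, Confusable t x y → h x = h y → x = y

theorem exists_isBurstHash {G : Type*} [Fintype G] {q t ℓ : ℕ}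
    (hG : confusableBound q t ℓ < Fintype.card G) : ∃ h : List ℕ → G, IsBurstHash q t ℓ h := by
  classical
  have : Nonempty G := Fintype.card_pos_iff.1 (Nat.zero_lt_of_lt hG)
  exact exists_separating_of_card_lt (fun _ _ h => h.symm) (words q ℓ) fun v hv =>
    (card_filter_confusable_le (mem_words.1 hv).1).trans_lt hG

/-! ### Sums of block hashes -/

/-- The block of length `ℓ` of `x` at position `a`, cut off at the end of `x`. -/
def block (ℓ a : ℕ) (x : List ℕ) : List ℕ := (x.drop a).take ℓ

theorem getElem?_block (ℓ a : ℕ) (x : List ℕ) (j : ℕ) :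
    (block ℓ a x)[j]? = if j < ℓ then x[a + j]? else none := by
  rw [block, List.getElem?_take, List.getElem?_drop]

theorem length_block (ℓ a : ℕ) (x : List ℕ) : (block ℓ a x).length = min ℓ (x.length - a) := by
  rw [block, List.length_take, List.length_drop]

theorem block_mem_words {q ℓ a : ℕ} {x : List ℕ} (hx : ∀ b ∈ x, b < q) :
    block ℓ a x ∈ words q ℓ :=
  mem_words.2 ⟨List.length_take_le _ _,
    fun b hb => hx b (List.mem_of_mem_drop (List.mem_of_mem_take hb))⟩

/-- The sum of the hashes of the consecutive blocks of length `ℓ` of `x`, starting at position `o`;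
the superfluous blocks at the end are empty. -/
def hashSum {G : Type*} [AddCommMonoid G] (h : List ℕ → G) (ℓ o : ℕ) (x : List ℕ) : G :=
  ∑ k ∈ Finset.range (x.length + 1), h (block ℓ (o + ℓ * k) x)

namespace Shift

variable {q t i i' τ ℓ : ℕ} {x y : List ℕ}

theorem shift_block (hs : Shift i i' τ x y) {a : ℕ} (ha : a ≤ i) (ha' : i' + τ ≤ a + ℓ) :
    Shift (i - a) (i' - a) τ (block ℓ a x) (block ℓ a y) := by
  obtain ⟨hlen, hle, hlx, hpre, hmid, hpost⟩ := hs
  refine ⟨by rw [length_block, length_block, hlen], by omega, by rw [length_block]; omega,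
    fun j hj => ?_, fun j hj hj' => ?_, fun j hj => ?_⟩ <;>
  rw [getElem?_block, getElem?_block]
  · rw [hpre _ (by omega)]
  · rw [if_pos (by omega), if_pos (by omega), ← add_assoc, hmid _ (by omega) (by omega)]
  · rw [hpost _ (by omega)]

theorem block_eq (hs : Shift i i' τ x y) {a : ℕ} (ha : a + ℓ ≤ i ∨ i' + τ ≤ a) :
    block ℓ a x = block ℓ a y := by
  refine List.ext_getElem? fun j => ?_
  rw [getElem?_block, getElem?_block]
  split_ifs with hj
  · exact ha.elim (fun ha => hs.pre _ (by omega)) (fun ha => hs.post _ (by omega))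
  · rfl

theorem eq_of_block_eq (hs : Shift i i' τ x y) {a : ℕ} (ha : a ≤ i) (ha' : i' + τ ≤ a + ℓ)
    (h : block ℓ a x = block ℓ a y) : x = y := by
  refine hs.eq_of_getElem?_eq fun j hij hj => ?_
  have hentry := congrArg (fun z : List ℕ => z[j - a]?) h
  simpa only [getElem?_block, if_pos (show j - a < ℓ by omega),
    Nat.add_sub_cancel' (ha.trans hij)] using hentry

theorem eq_of_hashSum_eq {G : Type*} [AddCancelCommMonoid G] {h : List ℕ → G}
    (hs : Shift i i' τ x y) (hτt : τ ≤ t) (hh : IsBurstHash q t ℓ h) (hx : ∀ a ∈ x, a < q)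
    (hy : ∀ a ∈ y, a < q) {o k : ℕ} (hℓ : 0 < ℓ) (hk : o + ℓ * k ≤ i)
    (hk' : i' + τ ≤ o + ℓ * k + ℓ) (hsum : hashSum h ℓ o x = hashSum h ℓ o y) : x = y := by
  have hkx : k ∈ Finset.range (x.length + 1) := by
    have := Nat.le_mul_of_pos_left k hℓ
    have := hs.le
    have := hs.add_le_length
    exact Finset.mem_range.2 (by omega)
  have hother : ∀ j ∈ (Finset.range (x.length + 1)).erase k,
      h (block ℓ (o + ℓ * j) x) = h (block ℓ (o + ℓ * j) y) := fun j hj => by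
    refine congrArg h (hs.block_eq ?_)
    rcases Nat.lt_or_gt_of_ne (Finset.ne_of_mem_erase hj) with hjk | hjk <;>
    · have hstep := Nat.mul_le_mul_left ℓ (Nat.succ_le_of_lt hjk)
      rw [Nat.mul_succ] at hstep
      omega
  rw [hashSum, hashSum, ← hs.length_eq, ← Finset.add_sum_erase _ _ hkx,
    ← Finset.add_sum_erase _ _ hkx, Finset.sum_congr rfl hother, add_left_inj] at hsum
  exact hs.eq_of_block_eq hk hk' <| hh _ (block_mem_words hx) _ (block_mem_words hy)
    ((hs.shift_block hk hk').confusable hτt) hsum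

end Shift

/-! ### The sketch -/

/-- The sketch of a string of length `n`: the number of occurrences of the pattern, their checksum,
and the sums of the block hashes for two partitions into blocks of length `2 * B` that are offset
by `B`, so that every interval of length at most `B` lies in a block of one of the partitions. -/
def sketch {G : Type*} [AddCommMonoid G] (t n B : ℕ) (h : List ℕ → G) (x : List ℕ) :
    ZMod (5 * t + 1) × ZMod (3 * t * n + 1) × G × G :=
  (occCount t x n, occChecksum t x, hashSum h (2 * B) 0 x, hashSum h (2 * B) B x)

section Sketch

variable {G : Type*} [AddCancelCommMonoid G] {q t n δ B : ℕ} {h : List ℕ → G} {x y : List ℕ}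

theorem Shift.eq_of_sketch_eq {i i' τ : ℕ} (hs : Shift i i' τ x y) (hτt : τ ≤ t)
    (hh : IsBurstHash q t (2 * B) h) (hB : (15 * t ^ 2 + 2) * δ + t ≤ B) (hlen : x.length = n)
    (hx : ∀ a ∈ x, a < q) (hy : ∀ a ∈ y, a < q) (hd : pdense t δ x)
    (heq : sketch t n B h x = sketch t n B h y) : x = y := by
  rcases Nat.eq_zero_or_pos τ with rfl | hτ
  · exact hs.eq_of_getElem?_eq fun j hij hj => hs.mid j hij hj
  simp only [sketch, Prod.mk.injEq] at heq
  obtain ⟨hcount, hsum, hhash, hhash'⟩ := heq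
  have hshort := hs.lt_add_of_dense hτ hτt hlen hd hcount hsum
  have hdiv := Nat.div_add_mod i (2 * B)
  have hmod := Nat.mod_lt i (show 0 < 2 * B by omega)
  rcases lt_or_ge (i % (2 * B)) B with hr | hr
  · exact hs.eq_of_hashSum_eq hτt hh hx hy (k := i / (2 * B)) (by omega) (by omega) (by omega) hhash
  · exact hs.eq_of_hashSum_eq hτt hh hx hy (k := i / (2 * B)) (by omega) (by omega) (by omega)
      hhash'

theorem Confusable.eq_of_sketch_eq (hxy : Confusable t x y) (hh : IsBurstHash q t (2 * B) h)
    (hB : (15 * t ^ 2 + 2) * δ + t ≤ B) (hlen : x.length = n)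
    (hx : ∀ a ∈ x, a < q) (hy : ∀ a ∈ y, a < q) (hdx : pdense t δ x) (hdy : pdense t δ y)
    (heq : sketch t n B h x = sketch t n B h y) : x = y := by
  obtain ⟨i, i', τ, hτt, hs | hs⟩ := hxy.exists_shift
  · exact hs.eq_of_sketch_eq hτt hh hB hlen hx hy hdx heq
  · exact (hs.eq_of_sketch_eq hτt hh hB (hxy.1.symm.trans hlen) hy hx hdy heq.symm).symm

end Sketch

/-- The number of values of a sketch whose block hashes take `confusableBound q t (2 * B) + 1`
values. -/
noncomputable def sketchSize (q t n B : ℕ) : ℕ :=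
  (5 * t + 1) * ((3 * t * n + 1) *
    ((confusableBound q t (2 * B) + 1) * (confusableBound q t (2 * B) + 1)))

theorem sketchSize_pos (q t n B : ℕ) : 0 < sketchSize q t n B := by
  rw [sketchSize]
  positivity

theorem exists_lt_sketchSize_eq_of_confusable (q n : ℕ) {t δ B : ℕ}
    (hB : (15 * t ^ 2 + 2) * δ + t ≤ B) :
    ∃ f : List ℕ → ℕ, (∀ x, f x < sketchSize q t n B) ∧
      ∀ x y : List ℕ, x.length = n → (∀ a ∈ x, a < q) → (∀ a ∈ y, a < q) → pdense t δ x →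
        pdense t δ y → f x = f y → Confusable t x y → x = y := by
  let G := ZMod (confusableBound q t (2 * B) + 1)
  let S := ZMod (5 * t + 1) × ZMod (3 * t * n + 1) × G × G
  obtain ⟨h, hh⟩ : ∃ h : List ℕ → G, IsBurstHash q t (2 * B) h :=
    exists_isBurstHash (by rw [ZMod.card]; exact Nat.lt_succ_self _)
  have e : S ≃ Fin (sketchSize q t n B) := Fintype.equivFinOfCardEq (by
    simp only [S, G, Fintype.card_prod, ZMod.card, sketchSize])
  exact ⟨fun x => e (sketch t n B h x), fun x => Fin.is_lt _,
    fun x y hlen hx hy hdx hdy heq hxy =>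
      hxy.eq_of_sketch_eq hh hB hlen hx hy hdx hdy (e.injective (Fin.ext heq))⟩

/-! ### The number of values of the sketch -/

theorem confusableBound_mul_add_one_le (q t a : ℕ) {l : ℕ} (hl : 1 ≤ l) :
    confusableBound q t (a * l) + 1 ≤ (confusableBound q t a + 1) * l ^ 2 := by
  have hal : a * l + 1 ≤ (a + 1) * l := by rw [add_mul, one_mul]; omega
  calc confusableBound q t (a * l) + 1
      ≤ (t + 1) * ((a + 1) * l * ((a + 1) * l * (words q t).card)) + l ^ 2 := by
        rw [confusableBound]
        exact Nat.add_le_add (by gcongr) (Nat.one_le_pow _ _ hl)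
    _ = (confusableBound q t a + 1) * l ^ 2 := by rw [confusableBound]; ring

theorem sketchSize_mul_le (q t b : ℕ) {n l : ℕ} (hn : 1 ≤ n) (hl : 1 ≤ l) :
    sketchSize q t n (b * l) ≤
      (5 * t + 1) * (3 * t + 1) * (confusableBound q t (2 * b) + 1) ^ 2 * n * l ^ 4 := by
  have hD := confusableBound_mul_add_one_le q t (2 * b) hl
  have hn' : 3 * t * n + 1 ≤ (3 * t + 1) * n := by rw [add_mul, one_mul]; omega
  calc sketchSize q t n (b * l)
      ≤ (5 * t + 1) * ((3 * t + 1) * n * ((confusableBound q t (2 * b) + 1) * l ^ 2 *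
          ((confusableBound q t (2 * b) + 1) * l ^ 2))) := by
        rw [sketchSize, ← mul_assoc 2]
        gcongr
    _ = _ := by ring

theorem natCast_clog_two_le {n : ℕ} (hn : 2 ≤ n) : (Nat.clog 2 n : ℝ) ≤ 2 * Real.logb 2 n := by
  have hlog : 1 ≤ Real.logb 2 n := by
    rw [Real.le_logb_iff_rpow_le one_lt_two (by positivity), Real.rpow_one]
    exact_mod_cast hn
  have hceil := Nat.ceil_lt_add_one (zero_le_one.trans hlog)
  rw [show ⌈Real.logb 2 n⌉₊ = Nat.clog 2 n by exact_mod_cast Real.natCeil_logb_natCast 2 n] at hceil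
  linarith

theorem eventually_logb_le_of_le_mul_clog_pow (c k : ℕ) {ε : ℝ} (hε : 0 < ε) :
    ∀ᶠ n : ℕ in Filter.atTop, ∀ N : ℕ, 0 < N → N ≤ c * n * Nat.clog 2 n ^ k →
      Real.logb 2 N ≤ Real.logb 2 n + (k + ε) * Real.logb 2 (Real.logb 2 n) := by
  have hlim : Filter.Tendsto (fun n : ℕ => Real.logb 2 n) Filter.atTop Filter.atTop :=
    (Real.tendsto_logb_atTop one_lt_two).comp tendsto_natCast_atTop_atTop
  filter_upwards [Filter.eventually_ge_atTop 2, hlim.eventually_gt_atTop 0,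
    ((Real.tendsto_logb_atTop one_lt_two).comp hlim).eventually_ge_atTop
      (Real.logb 2 (c * 2 ^ k) / ε)] with n hn hlog hloglog N hN hNle
  rw [Function.comp_apply, div_le_iff₀ hε] at hloglog
  have hn0 : (n : ℝ) ≠ 0 := by positivity
  have hc0 : c ≠ 0 := by
    rintro rfl
    rw [zero_mul, zero_mul] at hNle
    omega
  have hc : (c : ℝ) * 2 ^ k ≠ 0 := by positivity
  calc Real.logb 2 N
      ≤ Real.logb 2 (c * 2 ^ k * n * Real.logb 2 n ^ k) := by
        refine Real.logb_le_logb_of_le one_lt_two (by exact_mod_cast hN) ?_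
        calc (N : ℝ) ≤ c * n * (Nat.clog 2 n : ℝ) ^ k := by exact_mod_cast hNle
          _ ≤ c * n * (2 * Real.logb 2 n) ^ k := by gcongr; exact natCast_clog_two_le hn
          _ = c * 2 ^ k * n * Real.logb 2 n ^ k := by rw [mul_pow]; ring
    _ = Real.logb 2 (c * 2 ^ k) + Real.logb 2 n + k * Real.logb 2 (Real.logb 2 n) := by
        rw [Real.logb_mul (mul_ne_zero hc hn0) (by positivity), Real.logb_mul hc hn0, Real.logb_pow]
    _ ≤ _ := by linarith

theorem exists_sketch_for_dense_strings_general (q t C : ℕ) (ε : ℝ) (hε : 0 < ε) :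
    ∃ n₀ : ℕ, ∀ n ≥ n₀, ∃ N : ℕ, 0 < N ∧
      Real.logb 2 N ≤ Real.logb 2 n + (4 + ε) * Real.logb 2 (Real.logb 2 n) ∧
      ∃ f : List ℕ → ℕ, (∀ x : List ℕ, f x < N) ∧
        ∀ x x' : List ℕ, x.length = n → x'.length = n →
          (∀ a ∈ x, a < q) → (∀ a ∈ x', a < q) →
          pdense t (C * Nat.clog 2 n) x → pdense t (C * Nat.clog 2 n) x' →
          f x = f x' → (burstLe t x ∩ burstLe t x').Nonempty → x = x' := by
  let b := (15 * t ^ 2 + 2) * C + t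
  refine Filter.eventually_atTop.1 ?_
  filter_upwards [Filter.eventually_ge_atTop 2, eventually_logb_le_of_le_mul_clog_pow
    ((5 * t + 1) * (3 * t + 1) * (confusableBound q t (2 * b) + 1) ^ 2) 4 hε] with n hn hlog
  have hl : 1 ≤ Nat.clog 2 n := Nat.clog_pos one_lt_two hn
  have hB : (15 * t ^ 2 + 2) * (C * Nat.clog 2 n) + t ≤ b * Nat.clog 2 n := by
    rw [add_mul _ t, ← mul_assoc]
    exact Nat.add_le_add_left (Nat.le_mul_of_pos_right t hl) _
  obtain ⟨f, hfN, hf⟩ := exists_lt_sketchSize_eq_of_confusable q n hB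
  refine ⟨_, sketchSize_pos q t n _,
    hlog _ (sketchSize_pos q t n _) (sketchSize_mul_le q t b (one_le_two.trans hn) hl), f, hfN, ?_⟩
  exact fun x x' hx hx' hxq hxq' hd hd' hfx hburst =>
    hf x x' hx hxq hxq' hd hd' hfx ⟨hx.trans hx'.symm, hburst⟩

/-- for fixed `q > 2`, `t ≥ 1`, `ε > 0` and
`δ = 2t·q^{2t}·⌈log₂ n⌉`, for all large enough `n` there is a sketch
`f : Σ_q^n → {0, …, N−1}` with `log₂ N ≤ log₂ n + (8+ε)·log₂ log₂ n` that
separates any two `(p,δ)`-dense strings whose burst-deletion balls of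
radius `≤ t` intersect. -/
theorem exists_sketch_for_dense_strings
    (q t : ℕ) (ε : ℝ) (hq : 2 < q) (ht : 1 ≤ t) (hε : 0 < ε) :
    ∃ n₀ : ℕ, ∀ n ≥ n₀, ∃ N : ℕ, 0 < N ∧
      Real.logb 2 N ≤ Real.logb 2 n + (8 + ε) * Real.logb 2 (Real.logb 2 n) ∧
      ∃ f : List ℕ → ℕ, (∀ x : List ℕ, f x < N) ∧
        ∀ x x' : List ℕ, x.length = n → x'.length = n →
          (∀ a ∈ x, a < q) → (∀ a ∈ x', a < q) →
          pdense t (2 * t * q ^ (2 * t) * Nat.clog 2 n) x →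
          pdense t (2 * t * q ^ (2 * t) * Nat.clog 2 n) x' →
          f x = f x' → (burstLe t x ∩ burstLe t x').Nonempty → x = x' := by
  have h := exists_sketch_for_dense_strings_general q t (2 * t * q ^ (2 * t)) (4 + ε)
    (by positivity)
  rwa [show (4 : ℝ) + (4 + ε) = 8 + ε by ring] at h
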